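/- arXiv:1510.00756 — 2 statements merged into one kernel-verified Lean document; each statement's English description precedes it below -/
import Mathlib

section
/- For every hypergraph G and every hierarchy decomposition T of G, the width of T is at least the hierarchy width of G: w(T) ≥ hw(G). -/
/-!
For a hyperedge `e` let `S e` be the set of tree nodes whose label contains `e`. By the path and
parent conditions `S e` is the set of descendants of a single node, so if `S e` and `S f` meet,
one of them contains the other (`HierDecomp.nested`). In particular this holds for intersecting
hyperedges.

Given a connected set `C` of hyperedges, choose `e ∈ C` with `S e` maximal. Propagating along
intersecting hyperedges, nestedness gives `S f ⊆ S e` for all `f ∈ C`. Hence every label that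
meets `C` contains `e`, so removing `e` from `C` lowers the largest number of hyperedges of `C`
in one label by one. Induction on the number of hyperedges yields the bound (`hw_le_of_nested`).
-/

/-- Connectivity relation between hyperedges within the edge set `E` of a hypergraph whose
hyperedges have vertex sets given by `dep`. -/
def EdgeConn {α ι : Type*} (dep : ι → Finset α) (E : Finset ι) : ι → ι → Prop :=
  Relation.ReflTransGen fun a b => a ∈ E ∧ b ∈ E ∧ ∃ v, v ∈ dep a ∧ v ∈ dep b

open Classical in
/-- Hierarchy width of the hypergraph with hyperedges `E`, where hyperedge `e` consists of
the vertices `dep e`: `0` if there are no hyperedges; `1 +` the minimum over single-edge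
removals for a connected hypergraph; the maximum over connected components otherwise. -/
noncomputable def hw {α ι : Type*} [DecidableEq ι] (dep : ι → Finset α) (E : Finset ι) : ℕ :=
  E.sup fun e =>
    1 + ((E.filter fun f => EdgeConn dep E e f).attach.inf fun f =>
      ((hw dep ((E.filter fun f => EdgeConn dep E e f).erase f.1) : ℕ∞))).toNat
termination_by E.card
decreasing_by
  exact lt_of_lt_of_le (Finset.card_erase_lt_of_mem f.2)
    (Finset.card_le_card (Finset.filter_subset _ _))

/-- A hierarchy decomposition of the hypergraph with hyperedges `E` (hyperedge `e` has
vertex set `dep e`): a rooted tree whose nodes `v` are labeled with sets `χ v` of hyperedges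
such that (1) every hyperedge occurs in some label, (2) the nodes whose labels contain a
given hyperedge are connected along tree paths, (3) any two intersecting hyperedges occur
together in some label, and (4) the label of a parent is contained in the label of each of
its children (a node `u` is the parent of `v` if they are adjacent and `u` lies on the
unique path from `v` to the root). -/
structure HierDecomp {α ι : Type*} (dep : ι → Finset α) (E : Finset ι) where
  τ : Type
  fin : Fintype τ
  T : SimpleGraph τ
  tree : T.IsTree
  root : τ
  χ : τ → Finset ι
  sub : ∀ v, χ v ⊆ E
  cover : ∀ e ∈ E, ∃ v, e ∈ χ v
  pathconn : ∀ e : ι, ∀ u v : τ, e ∈ χ u → e ∈ χ v →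
    ∀ p : T.Walk u v, p.IsPath → ∀ w ∈ p.support, e ∈ χ w
  meet : ∀ e ∈ E, ∀ f ∈ E, (∃ a, a ∈ dep e ∧ a ∈ dep f) → ∃ v, e ∈ χ v ∧ f ∈ χ v
  parentMono : ∀ u v : τ, T.Adj u v →
    (∀ p : T.Walk v root, p.IsPath → u ∈ p.support) → χ u ⊆ χ v

/-- The width of a hierarchy decomposition: the size of its largest label. -/
noncomputable def HierDecomp.width {α ι : Type*} {dep : ι → Finset α} {E : Finset ι}
    (D : HierDecomp dep E) : ℕ :=
  letI := D.fin
  Finset.univ.sup fun v => (D.χ v).card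

open Classical in
/-- The combinatorial core, independent of any tree: if the node sets
`{v | e ∈ χ v}` are pairwise nested or disjoint, nonempty for `e ∈ F`, and meet for intersecting
hyperedges of `F`, then `hw dep F` is at most any bound on the number of members of `F` in a
label. -/
theorem hw_le_of_nested {α ι τ : Type*} [DecidableEq ι] (dep : ι → Finset α) (χ : τ → Finset ι)
    (nested : ∀ e f v, e ∈ χ v → f ∈ χ v →
      (∀ w, e ∈ χ w → f ∈ χ w) ∨ (∀ w, f ∈ χ w → e ∈ χ w)) :
    ∀ (k : ℕ) (F : Finset ι) (n : ℕ), F.card = k →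
      (∀ e ∈ F, ∃ v, e ∈ χ v) →
      (∀ e ∈ F, ∀ f ∈ F, (∃ a, a ∈ dep e ∧ a ∈ dep f) → ∃ v, e ∈ χ v ∧ f ∈ χ v) →
      (∀ v, (F.filter (· ∈ χ v)).card ≤ n) → hw dep F ≤ n := by
  intro k
  induction k using Nat.strong_induction_on with
  | _ k ih =>
  intro F n hk cover meet hn
  rw [hw]
  refine Finset.sup_le fun e he => ?_
  set C := F.filter fun f => EdgeConn dep F e f with hC
  have hCF : C ⊆ F := Finset.filter_subset _ _
  have heC : e ∈ C := Finset.mem_filter.2 ⟨he, Relation.ReflTransGen.refl⟩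
  -- `m ∈ C` is chosen with inclusion-maximal node set `{w | m ∈ χ w}`.
  obtain ⟨m, hmC, hmax⟩ : ∃ m ∈ C, ∀ f ∈ C,
      (∀ w, m ∈ χ w → f ∈ χ w) → (∀ w, f ∈ χ w → m ∈ χ w) := by
    obtain ⟨S, hS⟩ := (C.image fun f => {w | f ∈ χ w}).exists_maximal
      ⟨_, Finset.mem_image_of_mem _ heC⟩
    obtain ⟨m, hm, rfl⟩ := Finset.mem_image.1 hS.1
    exact ⟨m, hm, fun f hf h => hS.2 (Finset.mem_image_of_mem _ hf) h⟩
  have symm : ∀ a b, EdgeConn dep F a b → EdgeConn dep F b a := by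
    intro a b h
    induction h with
    | refl => exact Relation.ReflTransGen.refl
    | tail _ hbc ih =>
      obtain ⟨hx, hy, v, h1, h2⟩ := hbc
      exact ih.head ⟨hy, hx, v, h2, h1⟩
  have hall : ∀ f ∈ C, ∀ w, f ∈ χ w → m ∈ χ w := by
    intro f hf
    have hem := (Finset.mem_filter.1 hmC).2
    have hmf : EdgeConn dep F m f := (symm _ _ hem).trans (Finset.mem_filter.1 hf).2
    clear hf
    induction hmf with
    | refl => exact fun w h => h
    | @tail b c hmb hbc ihb =>
      obtain ⟨hb, hc, hv⟩ := hbc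
      obtain ⟨v, hbv, hcv⟩ := meet b hb c hc hv
      have hcC : c ∈ C := Finset.mem_filter.2
        ⟨hc, (hem.trans hmb).tail ⟨hb, hc, hv⟩⟩
      rcases nested c m v hcv (ihb v hbv) with h | h
      · exact h
      · exact hmax c hcC h
  obtain ⟨v₀, hv₀⟩ := cover m (hCF hmC)
  have hn1 : 1 ≤ n :=
    (Finset.card_pos.2 ⟨m, Finset.mem_filter.2 ⟨hCF hmC, hv₀⟩⟩).trans_le (hn v₀)
  have hlt : (C.erase m).card < k := by
    rw [← hk]
    exact (Finset.card_erase_lt_of_mem hmC).trans_le (Finset.card_le_card hCF)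
  have hsub : C.erase m ⊆ F := (Finset.erase_subset _ _).trans hCF
  have key : hw dep (C.erase m) ≤ n - 1 := by
    refine ih _ hlt _ _ rfl (fun a ha => cover a (hsub ha))
      (fun a ha b hb => meet a (hsub ha) b (hsub hb)) fun v => ?_
    rcases ((C.erase m).filter (· ∈ χ v)).eq_empty_or_nonempty with h0 | ⟨f, hf⟩
    · simp [h0]
    · obtain ⟨hf1, hf2⟩ := Finset.mem_filter.1 hf
      have hmv := hall f (Finset.mem_of_mem_erase hf1) v hf2
      have hss : (C.erase m).filter (· ∈ χ v) ⊂ F.filter (· ∈ χ v) := by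
        refine Finset.ssubset_iff_subset_ne.2 ⟨Finset.filter_subset_filter _ hsub, fun h => ?_⟩
        have : m ∈ (C.erase m).filter (· ∈ χ v) := by
          rw [h]; exact Finset.mem_filter.2 ⟨hCF hmC, hmv⟩
        simp at this
      have := Finset.card_lt_card hss
      have := hn v
      omega
  have hinf : (C.attach.inf fun f => ((hw dep (C.erase f.1) : ℕ) : ℕ∞)).toNat ≤ n - 1 := by
    refine ENat.toNat_le_of_le_natCast ?_
    refine (Finset.inf_le (Finset.mem_attach C ⟨m, hmC⟩)).trans ?_
    exact_mod_cast key
  omega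

/-- Two hyperedges sharing a label have nested node sets. On the path from the shared node to the
root the nodes carrying `e` and those carrying `f` are initial segments, hence comparable. Such a
comparison transfers from the root path of a node to that of any neighbour carrying `e`. -/
theorem HierDecomp.nested {α ι : Type*} {dep : ι → Finset α} {E : Finset ι}
    (D : HierDecomp dep E) (e f : ι) (v : D.τ) (he : e ∈ D.χ v) (hf : f ∈ D.χ v) :
    (∀ w, e ∈ D.χ w → f ∈ D.χ w) ∨ (∀ w, f ∈ D.χ w → e ∈ D.χ w) := by
  classical
  have huniq : ∀ a b, ∃! p : D.T.Walk a b, p.IsPath := fun a b => D.tree.existsUnique_path a b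
  choose P hP hPu using fun a => huniq a D.root
  have step : ∀ x y : ι, ∀ a b, D.T.Adj a b → y ∈ D.χ a → x ∈ D.χ b →
      (∀ c ∈ (P a).support, x ∈ D.χ c → y ∈ D.χ c) →
      (∀ c ∈ (P b).support, x ∈ D.χ c → y ∈ D.χ c) := by
    intro x y a b hab hya hxb hI
    by_cases hb : b ∈ (P a).support
    · -- `b` is the parent of `a`, so the root path of `b` is part of that of `a`.
      have h := hPu b _ ((hP a).dropUntil hb)
      intro c hc
      rw [← h] at hc
      exact hI c ((P a).support_dropUntil_subset_support hb hc)
    · -- `a` is the parent of `b`, and the root path of `b` extends that of `a` by `b`.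
      have h := hPu b _ ((hP a).cons (h := hab.symm) hb)
      have hmono : D.χ a ⊆ D.χ b := by
        refine D.parentMono a b hab fun p hp => ?_
        rw [hPu b p hp, ← h]
        simp
      intro c hc hxc
      rw [← h, SimpleGraph.Walk.support_cons, List.mem_cons] at hc
      rcases hc with rfl | hc
      · exact hmono hya
      · exact hI c hc hxc
  have spread : ∀ x y : ι, ∀ a b, ∀ p : D.T.Walk a b, (∀ c ∈ p.support, x ∈ D.χ c) →
      (∀ c ∈ (P a).support, x ∈ D.χ c → y ∈ D.χ c) → y ∈ D.χ b := by
    intro x y a b p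
    induction p with
    | nil => exact fun hx hI => hI _ (SimpleGraph.Walk.start_mem_support _) (hx _ (by simp))
    | cons h q ih =>
      intro hx hI
      have hya := hI _ (SimpleGraph.Walk.start_mem_support _) (hx _ (by simp))
      refine ih (fun c hc => hx c (by simp [hc])) (step x y _ _ h hya (hx _ (by simp)) hI)
  have concl : ∀ x y : ι, x ∈ D.χ v → (∀ c ∈ (P v).support, x ∈ D.χ c → y ∈ D.χ c) →
      ∀ w, x ∈ D.χ w → y ∈ D.χ w := by
    intro x y hx hI w hw
    obtain ⟨p, hp, -⟩ := huniq v w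
    exact spread x y v w p (D.pathconn x v w hx hw p hp) hI
  by_cases h : ∀ c ∈ (P v).support, e ∈ D.χ c → f ∈ D.χ c
  · exact Or.inl (concl e f he h)
  · refine Or.inr (concl f e hf fun b hb hfb => ?_)
    push Not at h
    obtain ⟨a, ha, hea, hfa⟩ := h
    have hspec := (P v).take_spec ha
    have hb2 := hb
    rw [← hspec, SimpleGraph.Walk.mem_support_append_iff] at hb2
    rcases hb2 with hb2 | hb2
    · exact D.pathconn e v a he hea _ ((hP v).takeUntil ha) b hb2
    · -- Here `a` lies between `v` and `b`, so it would carry `f`.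
      refine absurd ?_ hfa
      have hpath : (((P v).takeUntil a ha).append
          (((P v).dropUntil a ha).takeUntil b hb2)).IsPath := by
        apply SimpleGraph.Walk.IsPath.of_append_left
          (q := ((P v).dropUntil a ha).dropUntil b hb2)
        rw [← SimpleGraph.Walk.append_assoc, SimpleGraph.Walk.take_spec,
          SimpleGraph.Walk.take_spec]
        exact hP v
      refine D.pathconn f v b hf hfb _ hpath a ?_
      rw [SimpleGraph.Walk.mem_support_append_iff]
      exact Or.inl (SimpleGraph.Walk.end_mem_support _)

/-- For every hypergraph `G` and every hierarchy decomposition `T` of `G`, the width of `T`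
is at least the hierarchy width of `G`. -/
theorem stmt16 {α ι : Type*} [DecidableEq ι] (dep : ι → Finset α) (E : Finset ι)
    (D : HierDecomp dep E) : hw dep E ≤ D.width := by
  classical
  refine hw_le_of_nested dep D.χ D.nested _ E _ rfl D.cover D.meet fun v => ?_
  let := D.fin
  have h : (D.χ v).card ≤ D.width :=
    Finset.le_sup (f := fun v => (D.χ v).card) (Finset.mem_univ v)
  exact (Finset.card_le_card fun x hx => (Finset.mem_filter.1 hx).2).trans h
end

section
/- For every hypergraph G, there exists a hierarchy decomposition T of G whose width equals the hierarchy width of G: w(T) = hw(G). -/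
/-! ### Connected components and elimination forests -/

section Forest

variable {α ι : Type*}

open Classical in
/-- The set of hyperedges in the connected component of `e`. -/
noncomputable def edgeComp (dep : ι → Finset α) (E : Finset ι) (e : ι) : Finset ι :=
  E.filter fun f => EdgeConn dep E e f

lemma edgeConn_symm {dep : ι → Finset α} {E : Finset ι} {e f : ι} (h : EdgeConn dep E e f) :
    EdgeConn dep E f e := by
  induction h with
  | refl => exact Relation.ReflTransGen.refl
  | tail _ hbc ih =>
    obtain ⟨hb, hc, v, hvb, hvc⟩ := hbc
    exact Relation.ReflTransGen.head ⟨hc, hb, v, hvc, hvb⟩ ih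

lemma mem_edgeComp {dep : ι → Finset α} {E : Finset ι} {e f : ι} :
    f ∈ edgeComp dep E e ↔ f ∈ E ∧ EdgeConn dep E e f := by
  simp [edgeComp]

lemma self_mem_edgeComp {dep : ι → Finset α} {E : Finset ι} {e : ι} (he : e ∈ E) :
    e ∈ edgeComp dep E e :=
  mem_edgeComp.2 ⟨he, Relation.ReflTransGen.refl⟩

lemma edgeComp_subset {dep : ι → Finset α} {E : Finset ι} {e : ι} : edgeComp dep E e ⊆ E :=
  fun _ h => (mem_edgeComp.1 h).1

lemma edgeComp_eq {dep : ι → Finset α} {E : Finset ι} {e f : ι} (h : f ∈ edgeComp dep E e) :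
    edgeComp dep E f = edgeComp dep E e := by
  have h' := (mem_edgeComp.1 h).2
  ext g
  simp only [mem_edgeComp]
  exact ⟨fun k => ⟨k.1, Relation.ReflTransGen.trans h' k.2⟩,
    fun k => ⟨k.1, Relation.ReflTransGen.trans (edgeConn_symm h') k.2⟩⟩

/-- A choice of optimal roots: a hyperedge in each nonempty edge set, such that deleting it from
each component attains the minimum in the recursion for `hw`. -/
lemma exists_optimal_root [DecidableEq ι] [Nonempty ι] (dep : ι → Finset α) :
    ∃ r : Finset ι → ι, (∀ C : Finset ι, C.Nonempty → r C ∈ C) ∧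
      ∀ E : Finset ι, hw dep E = E.sup fun e =>
        1 + hw dep ((edgeComp dep E e).erase (r (edgeComp dep E e))) := by
  have key : ∀ C : Finset ι, ∃ x, C.Nonempty → x ∈ C ∧
      (C.attach.inf fun f => ((hw dep (C.erase f.1) : ℕ) : ℕ∞)) = (hw dep (C.erase x) : ℕ) := by
    intro C
    by_cases hC : C.Nonempty
    · obtain ⟨x, -, hx⟩ := Finset.exists_mem_eq_inf C.attach (Finset.attach_nonempty_iff.2 hC)
        (fun f => ((hw dep (C.erase f.1) : ℕ) : ℕ∞))
      exact ⟨x.1, fun _ => ⟨x.2, hx⟩⟩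
    · exact ⟨Classical.arbitrary ι, fun h => absurd h hC⟩
  choose r hr using key
  refine ⟨r, fun C hC => (hr C hC).1, fun E => ?_⟩
  rw [hw]
  refine Finset.sup_congr rfl fun e he => ?_
  have := (hr (edgeComp dep E e) ⟨e, self_mem_edgeComp he⟩).2
  change 1 + ENat.toNat ((edgeComp dep E e).attach.inf
    fun f => ((hw dep ((edgeComp dep E e).erase f.1) : ℕ) : ℕ∞)) = _
  rw [this, ENat.toNat_natCast]

/-- The map `a` sends each hyperedge of `E` to the set of its ancestors (itself included) in a
rooted forest on `E` in which intersecting hyperedges are comparable. -/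
structure IsElimForest (dep : ι → Finset α) (E : Finset ι) (a : ι → Finset ι) : Prop where
  self_mem : ∀ e ∈ E, e ∈ a e
  subset : ∀ e ∈ E, a e ⊆ E
  trans : ∀ e ∈ E, ∀ f ∈ a e, a f ⊆ a e
  antisymm : ∀ e ∈ E, ∀ f ∈ a e, e ∈ a f → e = f
  chain : ∀ e ∈ E, ∀ f ∈ a e, ∀ g ∈ a e, f ∈ a g ∨ g ∈ a f
  meet : ∀ e ∈ E, ∀ f ∈ E, (∃ v, v ∈ dep e ∧ v ∈ dep f) → e ∈ a f ∨ f ∈ a e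

/-- Gluing: a root for each component, with a forest of the remaining edges of that component
below it, is a forest on `E`. -/
lemma isElimForest_glue [DecidableEq ι] {dep : ι → Finset α} {E : Finset ι}
    (r : ι → ι) (A : ι → ι → Finset ι)
    (hr : ∀ e ∈ E, r e ∈ edgeComp dep E e)
    (hrc : ∀ e ∈ E, ∀ f ∈ edgeComp dep E e, r f = r e ∧ A f = A e)
    (hA : ∀ e ∈ E, IsElimForest dep ((edgeComp dep E e).erase (r e)) (A e)) :
    IsElimForest dep E fun e => insert (r e) (if e = r e then ∅ else A e e) := by
  have sub : ∀ e ∈ E, ∀ f ∈ insert (r e) (if e = r e then ∅ else A e e),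
      f ∈ edgeComp dep E e ∧ (f = r e ∨ (e ≠ r e ∧ f ≠ r e ∧ f ∈ A e e)) := by
    intro e he f hf
    rcases Finset.mem_insert.1 hf with rfl | hf
    · exact ⟨hr e he, .inl rfl⟩
    · split_ifs at hf with h
      · simp at hf
      · have h1 := (hA e he).subset e (Finset.mem_erase.2 ⟨h, self_mem_edgeComp he⟩) hf
        exact ⟨Finset.mem_of_mem_erase h1, .inr ⟨h, Finset.ne_of_mem_erase h1, hf⟩⟩
  have mem : ∀ e ∈ E, e ≠ r e → e ∈ (edgeComp dep E e).erase (r e) := fun e he h =>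
    Finset.mem_erase.2 ⟨h, self_mem_edgeComp he⟩
  constructor
  · intro e he
    by_cases h : e = r e
    · exact Finset.mem_insert.2 (.inl h)
    · have := (hA e he).self_mem e (mem e he h)
      simp [h, this]
  · intro e he f hf
    exact edgeComp_subset (sub e he f hf).1
  · intro e he f hf
    obtain ⟨h1, h2⟩ := sub e he f hf
    obtain ⟨h3, h4⟩ := hrc e he f h1
    rcases h2 with rfl | ⟨h5, h6, h7⟩
    · simp [h3]
    · have := (hA e he).trans e (mem e he h5) f h7
      simp only [h3, h4, h5, h6, if_false]
      exact Finset.insert_subset_insert _ this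
  · intro e he f hf hef
    obtain ⟨h1, h2⟩ := sub e he f hf
    obtain ⟨h3, h4⟩ := hrc e he f h1
    have h8 := (sub f (edgeComp_subset h1) e hef).2
    rw [h3, h4] at h8
    rcases h2 with h2 | ⟨h5, h6, h7⟩
    · rcases h8 with h8 | ⟨h8, -, -⟩
      · rw [h8, h2]
      · exact absurd h2 h8
    · rcases h8 with h8 | ⟨-, -, h8⟩
      · exact absurd h8 h5
      · exact (hA e he).antisymm e (mem e he h5) f h7 h8
  · intro e he f hf g hg
    obtain ⟨h1, h2⟩ := sub e he f hf
    obtain ⟨h3, h4⟩ := hrc e he f h1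
    obtain ⟨k1, k2⟩ := sub e he g hg
    obtain ⟨k3, k4⟩ := hrc e he g k1
    simp only [h3, h4, k3, k4]
    rcases h2 with h2 | ⟨h5, h6, h7⟩
    · left; simp [h2]
    rcases k2 with k2 | ⟨k5, k6, k7⟩
    · right; simp [k2]
    simp only [h6, k6, if_false, Finset.mem_insert, false_or]
    exact (hA e he).chain e (mem e he h5) f h7 g k7
  · intro e he f hf hef
    have h1 : f ∈ edgeComp dep E e :=
      mem_edgeComp.2 ⟨hf, Relation.ReflTransGen.single ⟨he, hf, hef⟩⟩
    obtain ⟨h3, h4⟩ := hrc e he f h1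
    simp only [h3, h4]
    by_cases h5 : e = r e
    · left; simp [← h5]
    by_cases h6 : f = r e
    · right; simp [← h6]
    simp only [h5, h6, if_false, Finset.mem_insert, false_or]
    exact (hA e he).meet e (mem e he h5) f (Finset.mem_erase.2 ⟨h6, h1⟩) hef

lemma exists_elimForest [DecidableEq ι] (dep : ι → Finset α) (E : Finset ι) :
    ∃ a, IsElimForest dep E a ∧ (E.sup fun e => (a e).card) = hw dep E := by
  rcases isEmpty_or_nonempty ι with _ | _
  · obtain rfl := Finset.eq_empty_of_isEmpty E
    refine ⟨fun _ => ∅, ⟨by simp, by simp, by simp, by simp, by simp, by simp⟩, ?_⟩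
    rw [hw]
    simp
  obtain ⟨r, hrmem, hhw⟩ := exists_optimal_root dep
  induction hn : E.card using Nat.strong_induction_on generalizing E with
  | _ n ih =>
  have ih' : ∀ D : Finset ι, ∃ a, D.card < E.card →
      IsElimForest dep D a ∧ (D.sup fun e => (a e).card) = hw dep D := by
    intro D
    by_cases h : D.card < E.card
    · obtain ⟨a, ha⟩ := ih D.card (hn ▸ h) D rfl
      exact ⟨a, fun _ => ha⟩
    · exact ⟨fun _ => ∅, fun h' => absurd h' h⟩
  choose A hA using ih'
  set R : ι → ι := fun e => r (edgeComp dep E e) with hR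
  set B : ι → ι → Finset ι := fun e => A ((edgeComp dep E e).erase (R e)) with hB
  have hRm : ∀ e ∈ E, R e ∈ edgeComp dep E e := fun e he => hrmem _ ⟨e, self_mem_edgeComp he⟩
  have hAB : ∀ e ∈ E, IsElimForest dep ((edgeComp dep E e).erase (R e)) (B e) ∧
      (((edgeComp dep E e).erase (R e)).sup fun f => (B e f).card) =
        hw dep ((edgeComp dep E e).erase (R e)) := fun e he =>
    hA _ ((Finset.card_erase_lt_of_mem (hRm e he)).trans_le (Finset.card_le_card edgeComp_subset))
  have hc : ∀ e ∈ E, ∀ f ∈ edgeComp dep E e, R f = R e ∧ B f = B e := by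
    intro e _ f hf
    simp only [hR, hB, edgeComp_eq hf, and_self]
  refine ⟨_, isElimForest_glue R B hRm hc fun e he => (hAB e he).1, ?_⟩
  rw [hhw E]
  apply le_antisymm
  · refine Finset.sup_mono_fun fun e he => ?_
    refine (Finset.card_insert_le _ _).trans ?_
    rw [add_comm]
    refine Nat.add_le_add_left ?_ _
    split_ifs with h
    · simp
    · rw [← (hAB e he).2]
      exact Finset.le_sup (f := fun f => (B e f).card)
        (Finset.mem_erase.2 ⟨h, self_mem_edgeComp he⟩)
  · refine Finset.sup_le fun e he => ?_
    change 1 + hw dep ((edgeComp dep E e).erase (R e)) ≤ _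
    rw [← (hAB e he).2]
    rcases ((edgeComp dep E e).erase (R e)).eq_empty_or_nonempty with h0 | h0
    · rw [h0]
      refine le_trans ?_ (Finset.le_sup he)
      simp [Nat.succ_le_iff, Finset.card_pos]
    · obtain ⟨g, hg, hgs⟩ := Finset.exists_mem_eq_sup _ h0 fun f => (B e f).card
      have hg' := Finset.mem_of_mem_erase hg
      rw [hgs]
      refine le_trans ?_ (Finset.le_sup (edgeComp_subset hg'))
      obtain ⟨h3, h4⟩ := hc e he g hg'
      have hnot : R e ∉ B e g := fun h => by
        simpa using (hAB e he).1.subset g hg h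
      simp only [h3, h4, Finset.ne_of_mem_erase hg, if_false]
      rw [Finset.card_insert_of_notMem hnot, add_comm]

end Forest

/-! ### Trees given by a parent function -/

section Tree

/-- The graph joining each `v ≠ root` to `par v`. -/
def parentGraph {V : Type*} (root : V) (par : V → V) : SimpleGraph V :=
  SimpleGraph.fromRel fun u v => u ≠ root ∧ par u = v

variable {V ι : Type*} {root : V} {par : V → V} {χ : V → Finset ι}

/-- If `par v` is the largest label below `v`, then going up from `v` to a smaller label `w`
passes only through labels between the two. -/
lemma exists_walk_between (hinj : Function.Injective χ) (hroot : χ root = ∅)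
    (hlt : ∀ v, v ≠ root → χ (par v) ⊂ χ v)
    (hmax : ∀ v w, χ w ⊂ χ v → χ w ⊆ χ (par v)) (v w : V) (h : χ w ⊆ χ v) :
    ∃ p : (parentGraph root par).Walk v w, ∀ x ∈ p.support, χ w ⊆ χ x ∧ χ x ⊆ χ v := by
  induction hn : (χ v).card using Nat.strong_induction_on generalizing v with
  | _ n ih =>
  rcases eq_or_ne v w with rfl | hvw
  · exact ⟨.nil, by simp⟩
  have hss : χ w ⊂ χ v := lt_of_le_of_ne h fun h' => hvw (hinj h'.symm)
  have hv : v ≠ root := by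
    rintro rfl
    rw [hroot] at hss
    exact Finset.not_ssubset_empty _ hss
  have hl := hlt v hv
  obtain ⟨p, hp⟩ := ih _ (hn ▸ Finset.card_lt_card hl) (par v) (hmax v w hss) rfl
  have hadj : (parentGraph root par).Adj v (par v) := by
    refine (SimpleGraph.fromRel_adj _ _ _).2 ⟨fun h' => ?_, .inl ⟨hv, rfl⟩⟩
    rw [← h'] at hl
    exact (ssubset_irrefl _ hl)
  refine ⟨.cons hadj p, fun x hx => ?_⟩
  rw [SimpleGraph.Walk.support_cons, List.mem_cons] at hx
  rcases hx with rfl | hx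
  · exact ⟨h, subset_rfl⟩
  · exact ⟨(hp x hx).1, (hp x hx).2.trans hl.1⟩

/-- A connected graph with at most `|V| - 1` edges is a tree; here every edge is `{v, par v}`
for some `v ≠ root`. -/
lemma parentGraph_isTree [Finite V] (hconn : (parentGraph root par).Connected) :
    (parentGraph root par).IsTree := by
  classical
  have := Fintype.ofFinite V
  refine SimpleGraph.isTree_iff_connected_and_card.2 ⟨hconn, le_antisymm ?_
    hconn.card_vert_le_card_edgeSet_add_one⟩
  have hsub : (parentGraph root par).edgeSet ⊆
      ((Finset.univ.erase root).image fun v => s(v, par v) : Finset (Sym2 V)) := by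
    intro e
    induction e with
    | _ u v =>
    intro h
    rw [SimpleGraph.mem_edgeSet] at h
    have h := ((SimpleGraph.fromRel_adj _ _ _).1 h).2
    simp only [Finset.coe_image, Set.mem_image, Finset.coe_erase]
    rcases h with ⟨h₀, rfl⟩ | ⟨h₀, rfl⟩
    · exact ⟨u, by simpa using h₀, rfl⟩
    · exact ⟨v, by simpa using h₀, Sym2.eq_swap⟩
  have h1 := Set.ncard_le_ncard hsub (Finset.finite_toSet _)
  rw [Set.ncard_coe_finset] at h1
  have h2 := h1.trans Finset.card_image_le
  rw [Finset.card_erase_of_mem (Finset.mem_univ _), Finset.card_univ] at h2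
  rw [Nat.card_coe_set_eq, Nat.card_eq_fintype_card]
  have : 0 < Fintype.card V := Fintype.card_pos_iff.2 ⟨root⟩
  omega

end Tree

/-! ### The decomposition -/

/-- Every hypergraph `G` has a hierarchy decomposition whose width equals the hierarchy
width of `G`. -/
theorem stmt17 {α ι : Type*} [DecidableEq ι] (dep : ι → Finset α) (E : Finset ι) :
    ∃ D : HierDecomp dep E, D.width = hw dep E := by
  obtain ⟨a, ha, hsup⟩ := exists_elimForest dep E
  set L : Finset (Finset ι) := insert ∅ (E.image a) with hL
  -- The nodes of a decomposition live in `Type`, so the labels are numbered by `Fin L.card`.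
  let eqv := L.equivFin
  let χ : Fin L.card → Finset ι := fun v => (eqv.symm v).1
  have hinj : Function.Injective χ := Subtype.val_injective.comp eqv.symm.injective
  have hχ : ∀ v, χ v = ∅ ∨ ∃ e ∈ E, a e = χ v := fun v => by
    have : χ v ∈ L := (eqv.symm v).2
    simpa [hL] using this
  have hnode : ∀ A ∈ L, ∃ v, χ v = A := fun A hA => ⟨eqv ⟨A, hA⟩, by simp [χ]⟩
  obtain ⟨root, hroot⟩ := hnode ∅ (Finset.mem_insert_self _ _)
  have hnodeE : ∀ e ∈ E, ∃ v, χ v = a e := fun e he =>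
    hnode _ (Finset.mem_insert_of_mem (Finset.mem_image_of_mem _ he))
  have hsub : ∀ v, χ v ⊆ E := fun v => by
    rcases hχ v with h | ⟨e, he, h⟩
    · simp [h]
    · exact h ▸ ha.subset e he
  have hup : ∀ v, ∀ e ∈ χ v, a e ⊆ χ v := fun v e hev => by
    rcases hχ v with h | ⟨f, hf, h⟩
    · simp [h] at hev
    · rw [← h] at hev ⊢
      exact ha.trans f hf e hev
  have hchain : ∀ v u w, χ u ⊆ χ v → χ w ⊆ χ v → χ u ⊆ χ w ∨ χ w ⊆ χ u := by
    intro v u w hu hw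
    rcases hχ u with h | ⟨f, hf, h⟩
    · simp [h]
    rcases hχ w with k | ⟨g, hg, k⟩
    · simp [k]
    have hfv := hu (h ▸ ha.self_mem f hf)
    have hgv := hw (k ▸ ha.self_mem g hg)
    rcases hχ v with l | ⟨e, he, l⟩
    · simp [l] at hfv
    rw [← l] at hfv hgv
    rw [← h, ← k]
    exact (ha.chain e he f hfv g hgv).imp (ha.trans g hg f) (ha.trans f hf g)
  have hpar : ∀ v, ∃ u, (v ≠ root → χ u ⊂ χ v) ∧ ∀ w, χ w ⊂ χ v → χ w ⊆ χ u := by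
    intro v
    rcases eq_or_ne v root with rfl | hv
    · exact ⟨v, fun h => absurd rfl h, fun w hw => hw.1⟩
    have hne : (Finset.univ.filter fun u => χ u ⊂ χ v).Nonempty := by
      refine ⟨root, Finset.mem_filter.2 ⟨Finset.mem_univ _, ?_⟩⟩
      rw [hroot, Finset.empty_ssubset, Finset.nonempty_iff_ne_empty, ← hroot]
      exact fun h => hv (hinj h)
    obtain ⟨u, hu, hmax⟩ := Finset.exists_max_image _ (fun u => (χ u).card) hne
    rw [Finset.mem_filter] at hu
    refine ⟨u, fun _ => hu.2, fun w hw => ?_⟩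
    rcases hchain v w u hw.1 hu.2.1 with h | h
    · exact h
    · have := hmax w (by simpa using hw)
      exact (Finset.eq_of_subset_of_card_le h this).symm.subset
  choose par hlt hmax using hpar
  have walk := exists_walk_between hinj hroot hlt hmax
  have hconn : (parentGraph root par).Connected := by
    refine SimpleGraph.connected_iff_exists_forall_reachable _ |>.2 ⟨root, fun v => ?_⟩
    obtain ⟨p, -⟩ := walk v root (by simp [hroot])
    exact p.reachable.symm
  have htree := parentGraph_isTree hconn
  refine ⟨{ τ := Fin L.card, fin := inferInstance, T := parentGraph root par, tree := htree,
            root := root, χ := χ, sub := hsub, cover := ?_, pathconn := ?_, meet := ?_,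
            parentMono := ?_ }, ?_⟩
  · intro e he
    obtain ⟨v, hv⟩ := hnodeE e he
    exact ⟨v, hv ▸ ha.self_mem e he⟩
  · intro e u v hu hv p hp w hw
    have he := hsub u hu
    obtain ⟨x, hx⟩ := hnodeE e he
    obtain ⟨q₁, h₁⟩ := walk u x (hx ▸ hup u e hu)
    obtain ⟨q₂, h₂⟩ := walk v x (hx ▸ hup v e hv)
    have hpq : p = (q₁.append q₂.reverse).bypass :=
      congrArg Subtype.val ((htree.isAcyclic.subsingleton_path u v).elim ⟨p, hp⟩
        ⟨_, SimpleGraph.Walk.bypass_isPath _⟩)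
    rw [hpq] at hw
    have hw' := SimpleGraph.Walk.support_bypass_subset_support _ hw
    have hex : e ∈ χ x := hx ▸ ha.self_mem e he
    rw [SimpleGraph.Walk.mem_support_append_iff, SimpleGraph.Walk.support_reverse,
      List.mem_reverse] at hw'
    rcases hw' with h | h
    · exact (h₁ w h).1 hex
    · exact (h₂ w h).1 hex
  · intro e he f hf hef
    rcases ha.meet e he f hf hef with h | h
    · obtain ⟨v, hv⟩ := hnodeE f hf
      exact ⟨v, hv ▸ h, hv ▸ ha.self_mem f hf⟩
    · obtain ⟨v, hv⟩ := hnodeE e he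
      exact ⟨v, hv ▸ ha.self_mem e he, hv ▸ h⟩
  · intro u v huv hp
    rcases ((SimpleGraph.fromRel_adj _ _ _).1 huv).2 with ⟨h, rfl⟩ | ⟨h, rfl⟩
    -- If `v = par u`, the upward walk from `v` only meets labels inside `χ v`, so `u` can lie on
    -- it only if `χ u ⊆ χ v`.
    · obtain ⟨q, hq⟩ := walk (par u) root (by simp [hroot])
      have := hp q.bypass (SimpleGraph.Walk.bypass_isPath _)
      exact (hq u (SimpleGraph.Walk.support_bypass_subset_support _ this)).2
    · exact (hlt v h).1
  · rw [← hsup]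
    apply le_antisymm
    · refine Finset.sup_le fun v _ => ?_
      change (χ v).card ≤ _
      rcases hχ v with h | ⟨e, he, h⟩
      · simp [h]
      · rw [← h]
        exact Finset.le_sup (f := fun e => (a e).card) he
    · refine Finset.sup_le fun e he => ?_
      obtain ⟨v, hv⟩ := hnodeE e he
      rw [← hv]
      exact Finset.le_sup (f := fun v => (χ v).card) (Finset.mem_univ v)
end
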